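/- Let B ⊆ ℝ³ be a centrally symmetric convex body such that every closed convex subset of B is parkable in B. Then B has the Blaschke property: for every nonzero vector u ∈ ℝ³ there exists a two-dimensional linear subspace H ⊆ ℝ³ such that every point p ∈ H ∩ ∂B lies on a B-supporting line with direction u, i.e. p + t•u ∉ int B for all t ∈ ℝ. -/

import Mathlib

/-!
Project `B` along `u` to a planar convex set `D`, and over every extreme point of `D` pick the top
point of `B`. If a polytope `P` spanned by top points meets the line `ℝ u`, parking it displaces the
projections of its vertices, which are extreme points of `D`, inside `D`, and the origin lies in
their hull; planar rigidity makes this displacement zero, so the translation is parallel to `u`. Top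
points can only be moved down, so the point of `P` that goes to the origin is a nonnegative multiple
of `u`. A minimal set of top points whose hull meets the open ray opposite to `u` has a hull that
meets `ℝ u` only there, and hence cannot be parked.

So the convex hull of the top points misses that ray, and a functional `g`, nonnegative on the
hull and positive at `u`, separates the two. Every chord of `B` in direction `u` has a point where
`g` is nonnegative. If `p` is in the kernel `H` of `g` and the line `p + ℝ u` meets `B`, then so
does the reflected line `-p + ℝ u`; hence the chord on `p + ℝ u` has points on both sides of `p`,
and `p ∈ B`.
-/

open Module Set Topology

section Polytope

variable {𝕜 : Type*} [Field 𝕜] [LinearOrder 𝕜] [IsStrictOrderedRing 𝕜]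

theorem exists_nonneg_add_mul_nonneg_and_eq_zero {ι : Type*} {S : Finset ι} {l d : ι → 𝕜}
    (hl : ∀ i ∈ S, 0 ≤ l i) (hd : ∃ i ∈ S, d i < 0) :
    ∃ t ≥ 0, (∀ i ∈ S, 0 ≤ l i + t * d i) ∧ ∃ j ∈ S, l j + t * d j = 0 := by
  obtain ⟨i₀, hi₀, hdi₀⟩ := hd
  obtain ⟨j, hj, hmin⟩ := (S.filter (d · < 0)).exists_min_image (fun i ↦ l i / -d i)
    ⟨i₀, Finset.mem_filter.2 ⟨hi₀, hdi₀⟩⟩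
  obtain ⟨hjS, hdj⟩ := Finset.mem_filter.1 hj
  have ht : 0 ≤ l j / -d j := div_nonneg (hl j hjS) (neg_nonneg.2 hdj.le)
  refine ⟨l j / -d j, ht, fun i hi ↦ ?_, j, hjS, by field_simp [hdj.ne]; ring⟩
  rcases lt_or_ge (d i) 0 with hdi | hdi
  · have hratio := hmin i (Finset.mem_filter.2 ⟨hi, hdi⟩)
    rw [le_div_iff₀ (neg_pos.2 hdi)] at hratio
    linarith
  · exact add_nonneg (hl i hi) (mul_nonneg ht hdi)

variable {V : Type*} [AddCommGroup V] [Module 𝕜 V]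

theorem exists_add_smul_sub_mem_convexHull_erase [DecidableEq V] {S : Finset V} {x z : V}
    (hx : x ∈ convexHull 𝕜 (S : Set V)) (hz : z ∈ convexHull 𝕜 (S : Set V)) (hxz : x ≠ z) :
    ∃ t : 𝕜, 0 ≤ t ∧ ∃ y ∈ S, z + t • (z - x) ∈ convexHull 𝕜 (S.erase y : Set V) := by
  obtain ⟨m, -, hm_sum, hmx⟩ := Finset.mem_convexHull'.1 hx
  obtain ⟨l, hl, hl_sum, hlz⟩ := Finset.mem_convexHull'.1 hz
  have hd : ∃ y ∈ S, l y - m y < 0 := by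
    by_contra! hle
    have heq : ∀ y ∈ S, l y - m y = 0 := by
      rw [← Finset.sum_eq_zero_iff_of_nonneg hle, Finset.sum_sub_distrib, hl_sum, hm_sum, sub_self]
    refine hxz (hmx.symm.trans (Eq.trans ?_ hlz))
    exact Finset.sum_congr rfl fun y hy ↦ by rw [sub_eq_zero.1 (heq y hy)]
  obtain ⟨t, ht, hnonneg, y, hy, hzero⟩ := exists_nonneg_add_mul_nonneg_and_eq_zero hl hd
  refine ⟨t, ht, y, hy, Finset.mem_convexHull'.2
    ⟨fun i ↦ l i + t * (l i - m i), fun i hi ↦ hnonneg i (Finset.mem_of_mem_erase hi), ?_, ?_⟩⟩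
  · rw [Finset.sum_erase S (f := fun i ↦ l i + t * (l i - m i)) hzero, Finset.sum_add_distrib,
      ← Finset.mul_sum, Finset.sum_sub_distrib, hl_sum, hm_sum, sub_self, mul_zero, add_zero]
  · rw [Finset.sum_erase S (f := fun i ↦ (l i + t * (l i - m i)) • i) (by rw [hzero, zero_smul])]
    simp only [add_smul, mul_smul, sub_smul, Finset.sum_add_distrib, ← Finset.smul_sum,
      Finset.sum_sub_distrib, hlz, hmx]

theorem exists_finset_convexHull_inter_line_subset_neg_ray {T : Set V} {u : V} (hu : u ≠ 0) {s : 𝕜}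
    (hs : 0 < s) (hT : -(s • u) ∈ convexHull 𝕜 T) :
    ∃ S : Finset V, ↑S ⊆ T ∧ (∃ s : 𝕜, 0 < s ∧ -(s • u) ∈ convexHull 𝕜 (S : Set V)) ∧
      ∀ r : 𝕜, r • u ∈ convexHull 𝕜 (S : Set V) → r < 0 := by
  classical
  let MeetsNegRay (S : Finset V) : Prop :=
    ↑S ⊆ T ∧ ∃ s : 𝕜, 0 < s ∧ -(s • u) ∈ convexHull 𝕜 (S : Set V)
  have hex : ∃ S, MeetsNegRay S := by
    rw [convexHull_eq_union_convexHull_finite_subsets] at hT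
    obtain ⟨S, hST, hS⟩ := mem_iUnion₂.1 hT
    exact ⟨S, hST, s, hs, hS⟩
  obtain ⟨S, ⟨hST, s, hs, hsS⟩, hmin⟩ := exists_minimal_of_wellFoundedLT MeetsNegRay hex
  refine ⟨S, hST, ⟨s, hs, hsS⟩, fun r hrS ↦ ?_⟩
  by_contra! hr
  have hne : r • u ≠ -(s • u) := by
    rw [← neg_smul]
    exact fun h ↦ (neg_neg_of_pos hs).not_ge (smul_left_injective 𝕜 hu h ▸ hr)
  obtain ⟨t, ht, y, hy, hmem⟩ := exists_add_smul_sub_mem_convexHull_erase hrS hsS hne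
  have herase : MeetsNegRay (S.erase y) := by
    refine ⟨(Finset.coe_subset.2 (S.erase_subset y)).trans hST, s + t * (s + r), by positivity, ?_⟩
    convert hmem using 1
    module
  exact S.notMem_erase y (hmin herase (S.erase_subset y) hy)

end Polytope

section Rigidity

variable {F : Type*} [AddCommGroup F] [Module ℝ F] {D : Set F} {e m q w : F}

theorem nonpos_of_mem_extremePoints_of_eq_add_smul {x : ℝ} (he : e ∈ D.extremePoints ℝ)
    (hw : w ≠ 0) (hew : e + w ∈ D) (hq : q ∈ D) (heq : e = q + x • w) : x ≤ 0 := by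
  by_contra! hx
  have hseg : e ∈ openSegment ℝ (e + w) q := by
    refine ⟨x / (x + 1), 1 / (x + 1), by positivity, by positivity, by field_simp, ?_⟩
    rw [heq]
    match_scalars <;> field_simp
  exact hw (add_eq_left.1 (he.2 hew hq hseg))

theorem smul_eq_or_eq_neg_of_mem_extremePoints {y : ℝ} (hD : Balanced ℝ D) (hm : m ∈ D)
    (hy : |y| ≤ 1) (hext : y • m ∈ D.extremePoints ℝ) : y • m = m ∨ y • m = -m := by
  rcases hy.lt_or_eq with hy | hy
  · obtain ⟨hy₁, hy₂⟩ := abs_lt.1 hy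
    have hseg : y • m ∈ openSegment ℝ m (-m) :=
      ⟨(1 + y) / 2, (1 - y) / 2, by linarith, by linarith, by ring, by module⟩
    exact .inl (hext.2 hm (hD.neg_mem_iff.2 hm) hseg).symm
  · rcases eq_or_eq_neg_of_abs_eq hy with rfl | rfl
    · exact .inl (one_smul ℝ m)
    · exact .inr (neg_one_smul ℝ m)

theorem neg_mem_extremePoints (hD : Balanced ℝ D) (he : e ∈ D.extremePoints ℝ) :
    -e ∈ D.extremePoints ℝ := by
  have hneg : LinearEquiv.neg ℝ '' D = D :=
    image_neg_eq_neg.trans (Set.ext fun _ ↦ hD.neg_mem_iff)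
  rw [← hneg, ← image_extremePoints]
  exact mem_image_of_mem _ he

theorem neg_of_mem_extremePoints_of_eq_smul_add_smul {x y : ℝ} (hD : Balanced ℝ D) (hm : m ∈ D)
    (hm_ext : m ∈ D.extremePoints ℝ → m + w ∉ D ∧ m - w ∉ D) (he : e ∈ D.extremePoints ℝ)
    (hw : w ≠ 0) (hew : e + w ∈ D) (hy : |y| ≤ 1) (heq : e = y • m + x • w) : x < 0 := by
  refine (nonpos_of_mem_extremePoints_of_eq_add_smul he hw hew (hD.smul_mem hy hm) heq).lt_of_ne ?_
  rintro rfl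
  rw [zero_smul, add_zero] at heq
  rcases smul_eq_or_eq_neg_of_mem_extremePoints hD hm hy (heq ▸ he) with h | h
  · obtain rfl : e = m := heq.trans h
    exact (hm_ext he).1 hew
  · obtain rfl : m = -e := by rw [heq, h, neg_neg]
    refine (hm_ext (neg_mem_extremePoints hD he)).2 ?_
    rwa [← neg_add', hD.neg_mem_iff]

theorem exists_dual_ker_eq_span_singleton [FiniteDimensional ℝ F] (hF : finrank ℝ F ≤ 2)
    (hw : w ≠ 0) : ∃ ψ : Dual ℝ F, LinearMap.ker ψ = ℝ ∙ w := by
  rcases eq_or_ne (ℝ ∙ w) ⊤ with htop | htop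
  · exact ⟨0, by rw [LinearMap.ker_zero, htop]⟩
  · obtain ⟨ψ, hψ, hle⟩ := Submodule.exists_le_ker_of_lt_top _ htop.lt_top
    have hker := Module.Dual.finrank_ker_add_one_of_ne_zero hψ
    refine ⟨ψ, (Submodule.eq_of_le_of_finrank_le hle ?_).symm⟩
    rw [finrank_span_singleton hw]
    lia

variable [TopologicalSpace F]

-- If the face of `D` on which `ψ` is maximal contains a segment `[p, p + w]`, the midpoint of that
-- segment is not extreme; otherwise every point of the face works.
theorem exists_isMaxOn_forall_mem_extremePoints_add_notMem (hD : IsCompact D) (hconv : Convex ℝ D)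
    (hne : D.Nonempty) {ψ : Dual ℝ F} (hψ : Continuous ψ) (hw : w ≠ 0) (hψw : ψ w = 0) :
    ∃ m ∈ D, IsMaxOn ψ D m ∧ (m ∈ D.extremePoints ℝ → m + w ∉ D ∧ m - w ∉ D) := by
  obtain ⟨a, haD, hmax⟩ := hD.exists_isMaxOn hne hψ.continuousOn
  by_cases hlong : ∃ p ∈ D, ψ p = ψ a ∧ p + w ∈ D
  · obtain ⟨p, hp, hpa, hpw⟩ := hlong
    have hmid : p + (1 / 2 : ℝ) • w ∈ openSegment ℝ p (p + w) :=
      ⟨1 / 2, 1 / 2, by norm_num, by norm_num, by norm_num, by module⟩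
    refine ⟨p + (1 / 2 : ℝ) • w, hconv.openSegment_subset hp hpw hmid, fun x hx ↦ ?_, fun hext ↦ ?_⟩
    · simpa [hψw, hpa] using hmax hx
    · have hp_eq := hext.2 hp hpw hmid
      simp [hw] at hp_eq
  · push Not at hlong
    refine ⟨a, haD, hmax, fun _ ↦ ⟨hlong a haD rfl, fun haw ↦ ?_⟩⟩
    exact hlong (a - w) haw (by rw [map_sub, hψw, sub_zero]) (by rwa [sub_add_cancel])

variable [IsTopologicalAddGroup F] [ContinuousSMul ℝ F] [T2Space F] [FiniteDimensional ℝ F]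

-- With `ψ` vanishing on `w` and maximal on `D` at `m`, every chord of `D` parallel to `w` meets the
-- segment `[-m, m]`. An extreme point that `w` moves inside `D` must lie strictly before that
-- meeting point; `χ` measures the displacement from it in units of `w`.
theorem exists_dual_neg_on_extremePoints_add_mem (hF : finrank ℝ F ≤ 2) (hD : IsCompact D)
    (hconv : Convex ℝ D) (hbal : Balanced ℝ D) (hne : D.Nonempty) (hw : w ≠ 0) :
    ∃ χ : Dual ℝ F, ∀ e ∈ D.extremePoints ℝ, e + w ∈ D → χ e < 0 := by
  obtain ⟨ψ, hψ⟩ := exists_dual_ker_eq_span_singleton hF hw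
  have hψw : ψ w = 0 := by
    rw [← LinearMap.mem_ker, hψ]
    exact Submodule.mem_span_singleton_self w
  obtain ⟨m, hm, hmax, hm_ext⟩ := exists_isMaxOn_forall_mem_extremePoints_add_notMem hD hconv hne
    ψ.continuous_of_finiteDimensional hw hψw
  obtain ⟨κ, hκw⟩ := Module.Projective.exists_dual_eq_one ℝ hw
  refine ⟨κ - (κ m / ψ m) • ψ, fun e he hew ↦ ?_⟩
  have hψe : |ψ e| ≤ ψ m :=
    abs_le'.2 ⟨hmax he.1, by simpa using hmax (hbal.neg_mem_iff.2 he.1)⟩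
  have hψm : 0 ≤ ψ m := (abs_nonneg _).trans hψe
  have hy : |ψ e / ψ m| ≤ 1 := by
    rw [abs_div, abs_of_nonneg hψm]
    exact div_le_one_of_le₀ hψe hψm
  obtain ⟨x, hx⟩ : ∃ x : ℝ, x • w = e - (ψ e / ψ m) • m := by
    rw [← Submodule.mem_span_singleton, ← hψ, LinearMap.mem_ker, map_sub, map_smul, smul_eq_mul,
      div_mul_cancel_of_imp fun hψm₀ ↦ abs_nonpos_iff.1 (hψe.trans_eq hψm₀), sub_self]
  have hχe : (κ - (κ m / ψ m) • ψ) e = x := by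
    calc (κ - (κ m / ψ m) • ψ) e = κ (e - (ψ e / ψ m) • m) := by
          simp only [LinearMap.sub_apply, LinearMap.smul_apply, map_sub, map_smul, smul_eq_mul]
          ring
      _ = x := by rw [← hx, map_smul, hκw, smul_eq_mul, mul_one]
  rw [hχe]
  exact neg_of_mem_extremePoints_of_eq_smul_add_smul hbal hm hm_ext he hw hew hy (by rw [hx]; abel)

theorem eq_zero_of_zero_mem_convexHull_extremePoints_add_mem (hF : finrank ℝ F ≤ 2)
    (hD : IsCompact D) (hconv : Convex ℝ D) (hbal : Balanced ℝ D)
    (h0 : 0 ∈ convexHull ℝ {e ∈ D.extremePoints ℝ | e + w ∈ D}) : w = 0 := by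
  by_contra hw
  obtain ⟨e₀, he₀, -⟩ := convexHull_nonempty_iff.1 ⟨0, h0⟩
  obtain ⟨χ, hχ⟩ := exists_dual_neg_on_extremePoints_add_mem hF hD hconv hbal ⟨e₀, he₀.1⟩ hw
  have hsub : convexHull ℝ {e ∈ D.extremePoints ℝ | e + w ∈ D} ⊆ {x | χ x < 0} :=
    convexHull_min (fun e he ↦ hχ e he.1 he.2) (convex_halfSpace_lt χ.isLinear 0)
  simpa using hsub h0

end Rigidity

section Support

variable {E : Type*} [AddCommGroup E] [Module ℝ E]

theorem mem_of_add_smul_mem_of_apply_eq_zero {B : Set E} {u : E} (hconv : Convex ℝ B)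
    (hbal : Balanced ℝ B) {g : Dual ℝ E} (hgu : 0 < g u)
    (hg : ∀ x ∈ B, ∃ r : ℝ, x + r • u ∈ B ∧ 0 ≤ g (x + r • u)) {p : E} (hp : g p = 0) {t : ℝ}
    (hpt : p + t • u ∈ B) : p ∈ B := by
  have hupper {x : E} {t : ℝ} (hx : g x = 0) (hxt : x + t • u ∈ B) :
      ∃ r : ℝ, 0 ≤ r ∧ x + r • u ∈ B := by
    obtain ⟨r, hr, hgr⟩ := hg _ hxt
    rw [add_assoc, ← add_smul] at hr hgr
    rw [map_add, hx, zero_add, map_smul, smul_eq_mul] at hgr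
    exact ⟨t + r, nonneg_of_mul_nonneg_left hgr hgu, hr⟩
  obtain ⟨r, hr, hrB⟩ := hupper hp hpt
  obtain ⟨r', hr', hrB'⟩ : ∃ r : ℝ, 0 ≤ r ∧ -p + r • u ∈ B := by
    refine hupper (t := -t) (by rw [map_neg, hp, neg_zero]) ?_
    rwa [neg_smul, ← neg_add, hbal.neg_mem_iff]
  have hlower : p + (-r') • u ∈ B := by
    rw [← hbal.neg_mem_iff]
    convert hrB' using 1
    module
  have hline : Convex ℝ {t : ℝ | p + t • u ∈ B} :=
    (hconv.translate_preimage_right p).linear_preimage (LinearMap.toSpanSingleton ℝ E u)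
  simpa using hline.ordConnected.out hlower hrB ⟨neg_nonpos.2 hr', hr⟩

variable [TopologicalSpace E] [IsTopologicalAddGroup E] [ContinuousSMul ℝ E]

theorem mem_interior_of_add_smul_mem_interior {B : Set E} {H : Submodule ℝ E} {u p : E} {t : ℝ}
    (hconv : Convex ℝ B) (hB : B ∈ 𝓝 0) (hH : ∀ p ∈ H, ∀ t : ℝ, p + t • u ∈ B → p ∈ B)
    (hp : p ∈ H) (hpt : p + t • u ∈ interior B) : p ∈ interior B := by
  rw [← gauge_lt_one_iff_mem_interior hconv hB] at hpt ⊢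
  obtain ⟨b, hb, hb₁, x, hx, hbx : b • x = p + t • u⟩ :=
    exists_lt_of_gauge_lt (absorbent_nhds_zero hB) hpt
  have hx_eq : x = b⁻¹ • p + (b⁻¹ * t) • u := by
    rw [← inv_smul_smul₀ hb.ne' x, hbx, smul_add, mul_smul]
  have hpB : b⁻¹ • p ∈ B := hH _ (H.smul_mem _ hp) _ (hx_eq ▸ hx)
  exact (gauge_le_of_mem hb.le ⟨b⁻¹ • p, hpB, smul_inv_smul₀ hb.ne' p⟩).trans_lt hb₁

theorem mem_nhds_zero_of_balanced {B : Set E} (hconv : Convex ℝ B) (hbal : Balanced ℝ B)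
    (hint : (interior B).Nonempty) : B ∈ 𝓝 0 := by
  obtain ⟨x, hx⟩ := hint
  have hseg : (0 : E) ∈ openSegment ℝ x (-x) :=
    ⟨1 / 2, 1 / 2, by norm_num, by norm_num, by norm_num, by module⟩
  exact mem_interior_iff_mem_nhds.1 (hconv.openSegment_interior_self_subset_interior hx
    (hbal.neg_mem_iff.2 (interior_subset hx)) hseg)

theorem zero_notMem_interior_convexHull_insert {T : Set E} {u : E} (hu : u ≠ 0) (hT : T.Nonempty)
    (hray : ∀ s : ℝ, 0 < s → -(s • u) ∉ convexHull ℝ T) :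
    0 ∉ interior (convexHull ℝ (insert u T)) := by
  intro h0
  have hnear : ∀ᶠ c : ℝ in 𝓝[>] 0, -(c • u) ∈ convexHull ℝ (insert u T) := by
    have hlim : Filter.Tendsto (fun c : ℝ ↦ -(c • u)) (𝓝[>] 0) (𝓝 0) :=
      (Continuous.tendsto' (by fun_prop) _ _ (by simp)).mono_left nhdsWithin_le_nhds
    exact hlim.eventually (mem_interior_iff_mem_nhds.1 h0)
  obtain ⟨c, hc, hc₀ : 0 < c⟩ := (hnear.and self_mem_nhdsWithin).exists
  rw [convexHull_insert hT, convexJoin_singleton_left] at hc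
  obtain ⟨q, hq, a, b, ha, hb, -, hcomb⟩ := mem_iUnion₂.1 hc
  rcases hb.eq_or_lt with rfl | hb
  · have hcu : (a + c) • u = 0 := by
      rw [add_smul, ← eq_neg_iff_add_eq_zero, ← hcomb, zero_smul, add_zero]
    exact smul_ne_zero (by positivity) hu hcu
  · refine hray (b⁻¹ * (a + c)) (by positivity) ?_
    have hbq : b • q = -((a + c) • u) := by
      rw [eq_sub_of_add_eq' hcomb]
      module
    rwa [mul_smul, ← smul_neg, ← hbq, inv_smul_smul₀ hb.ne']

end Support

section Separation

variable {E : Type*} [NormedAddCommGroup E] [NormedSpace ℝ E]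

theorem exists_ne_zero_forall_le_of_notMem_interior [FiniteDimensional ℝ E] {A : Set E} {x : E}
    (hA : Convex ℝ A) (hne : A.Nonempty) (hx : x ∉ interior A) :
    ∃ f : StrongDual ℝ E, f ≠ 0 ∧ ∀ a ∈ A, f a ≤ f x := by
  by_cases hint : (interior A).Nonempty
  · exact geometric_hahn_banach_of_nonempty_interior_point hA hx hint
  · rw [hA.interior_nonempty_iff_affineSpan_eq_top,
      ← AffineSubspace.direction_eq_top_iff_of_nonempty ((affineSpan_nonempty ℝ).2 hne)] at hint
    obtain ⟨f, hf, hdir⟩ := Submodule.exists_le_ker_of_lt_top _ (Ne.lt_top hint)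
    obtain ⟨a₀, ha₀⟩ := hne
    have hconst : ∀ a ∈ A, f a = f a₀ := fun a ha ↦ by
      rw [← sub_eq_zero, ← map_sub]
      exact hdir (AffineSubspace.vsub_mem_direction (subset_affineSpan ℝ A ha)
        (subset_affineSpan ℝ A ha₀))
    have hfc : LinearMap.toContinuousLinearMap f ≠ 0 :=
      (map_ne_zero_iff _ LinearMap.toContinuousLinearMap.injective).2 hf
    rcases le_total (f a₀) (f x) with h | h
    · exact ⟨f.toContinuousLinearMap, hfc, fun a ha ↦ (hconst a ha).trans_le h⟩
    · exact ⟨-f.toContinuousLinearMap, neg_ne_zero.2 hfc,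
        fun a ha ↦ neg_le_neg (h.trans_eq (hconst a ha).symm)⟩

theorem exists_ne_zero_nonneg_of_neg_smul_notMem_convexHull [FiniteDimensional ℝ E] {T : Set E}
    {u : E} (hu : u ≠ 0) (hT : T.Nonempty)
    (hray : ∀ s : ℝ, 0 < s → -(s • u) ∉ convexHull ℝ T) :
    ∃ g : StrongDual ℝ E, g ≠ 0 ∧ 0 ≤ g u ∧ ∀ q ∈ convexHull ℝ T, 0 ≤ g q := by
  obtain ⟨f, hf, hle⟩ := exists_ne_zero_forall_le_of_notMem_interior (convex_convexHull ℝ _)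
    (insert_nonempty u T).convexHull (zero_notMem_interior_convexHull_insert hu hT hray)
  refine ⟨-f, neg_ne_zero.2 hf, ?_, fun q hq ↦ ?_⟩
  · simpa using hle u (subset_convexHull ℝ _ (mem_insert u T))
  · simpa using hle q (convexHull_mono (subset_insert u T) hq)

theorem eq_zero_of_nonneg_on_nhds_zero {B : Set E} (hB : B ∈ 𝓝 0) {g : StrongDual ℝ E}
    (hg : ∀ x ∈ B, 0 ≤ g x) : g = 0 := by
  have hmin : IsLocalMin g 0 := by
    filter_upwards [hB] with x hx
    simpa using hg x hx
  exact hmin.hasFDerivAt_eq_zero g.hasFDerivAt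

end Separation

section Parkable

variable {E : Type*} [AddCommGroup E]

/-- The set `C` is parkable in `B`: some translate of `C` contains the origin and lies in `B`. -/
def Parkable (C B : Set E) : Prop :=
  ∃ v, 0 ∈ (fun x ↦ x + v) '' C ∧ (fun x ↦ x + v) '' C ⊆ B

theorem Parkable.exists_forall_sub_mem {C B : Set E} (h : Parkable C B) :
    ∃ c ∈ C, ∀ x ∈ C, x - c ∈ B := by
  obtain ⟨v, ⟨c, hc, hcv⟩, hvB⟩ := h
  refine ⟨c, hc, fun x hx ↦ hvB ⟨x, hx, ?_⟩⟩
  rw [eq_neg_of_add_eq_zero_right hcv, sub_eq_add_neg]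

variable [Module ℝ E]

/-- The points of `B` at which a line in direction `u` leaves `B` and which project along `u` to an
extreme point of the shadow of `B` in the quotient by `ℝ ∙ u`. -/
def topExtremePoints (B : Set E) (u : E) : Set E :=
  {p ∈ B | (ℝ ∙ u).mkQ p ∈ ((ℝ ∙ u).mkQ '' B).extremePoints ℝ ∧ ∀ t : ℝ, p + t • u ∈ B → t ≤ 0}

variable {B : Set E} {u : E}

theorem topExtremePoints_subset : topExtremePoints B u ⊆ B :=
  fun _ hp ↦ hp.1

theorem mkQ_span_singleton_eq_iff {x y : E} :
    (ℝ ∙ u).mkQ x = (ℝ ∙ u).mkQ y ↔ ∃ r : ℝ, y = x + r • u := by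
  rw [eq_comm, Submodule.mkQ_apply, Submodule.mkQ_apply, Submodule.Quotient.eq,
    Submodule.mem_span_singleton]
  exact exists_congr fun r ↦ by rw [eq_comm, sub_eq_iff_eq_add']

theorem balanced_image_of_balanced {F : Type*} [AddCommGroup F] [Module ℝ F] (hbal : Balanced ℝ B)
    (f : E →ₗ[ℝ] F) : Balanced ℝ (f '' B) := by
  rintro a ha _ ⟨_, ⟨x, hx, rfl⟩, rfl⟩
  exact ⟨a • x, hbal.smul_mem ha hx, map_smul f a x⟩

theorem finrank_quotient_span_singleton_add_one [FiniteDimensional ℝ E] (hu : u ≠ 0) :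
    finrank ℝ (E ⧸ ℝ ∙ u) + 1 = finrank ℝ E := by
  rw [← finrank_span_singleton (K := ℝ) hu, Submodule.finrank_quotient_add_finrank]

end Parkable

section Shadow

variable {E : Type*} [NormedAddCommGroup E] [NormedSpace ℝ E] {B : Set E} {u : E}

instance t2Space_quotient_span_singleton : T2Space (E ⧸ ℝ ∙ u) :=
  have : IsClosed (ℝ ∙ u : Set E) := Submodule.closed_of_finiteDimensional _
  inferInstance

theorem extremePoints_subset_image_topExtremePoints (hB : IsCompact B) (hu : u ≠ 0) :
    ((ℝ ∙ u).mkQ '' B).extremePoints ℝ ⊆ (ℝ ∙ u).mkQ '' topExtremePoints B u := by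
  intro e he
  obtain ⟨p, hp, hpe⟩ := he.1
  obtain ⟨φ, hφu⟩ := SeparatingDual.exists_eq_one (R := ℝ) hu
  have hfiber : IsCompact (B ∩ (ℝ ∙ u).mkQ ⁻¹' {e}) :=
    hB.inter_right (isClosed_singleton.preimage (ℝ ∙ u).mkQL.continuous)
  obtain ⟨q, ⟨hq, hqe : (ℝ ∙ u).mkQ q = e⟩, hmax⟩ :=
    hfiber.exists_isMaxOn ⟨p, hp, hpe⟩ φ.continuous.continuousOn
  refine ⟨q, ⟨hq, hqe ▸ he, fun t ht ↦ ?_⟩, hqe⟩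
  have hle : φ (q + t • u) ≤ φ q :=
    hmax ⟨ht, (mkQ_span_singleton_eq_iff.2 ⟨t, rfl⟩).symm.trans hqe⟩
  simpa [hφu] using hle

theorem exists_add_smul_mem_closure_convexHull_topExtremePoints (hB : IsCompact B)
    (hconv : Convex ℝ B) (hu : u ≠ 0) {x : E} (hx : x ∈ B) :
    ∃ r : ℝ, x + r • u ∈ closure (convexHull ℝ (topExtremePoints B u)) := by
  set K := closure (convexHull ℝ (topExtremePoints B u))
  have hK : IsCompact K := hB.of_isClosed_subset isClosed_closure
    (closure_minimal (convexHull_min topExtremePoints_subset hconv) hB.isClosed)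
  have hBQ : IsCompact ((ℝ ∙ u).mkQ '' B) := hB.image (ℝ ∙ u).mkQL.continuous
  have hshadow : (ℝ ∙ u).mkQ '' B ⊆ (ℝ ∙ u).mkQ '' K := by
    rw [← closure_convexHull_extremePoints hBQ (hconv.linear_image _)]
    refine closure_minimal (convexHull_min ?_ ?_) (hK.image (ℝ ∙ u).mkQL.continuous).isClosed
    · exact (extremePoints_subset_image_topExtremePoints hB hu).trans
        (image_mono ((subset_convexHull ℝ _).trans subset_closure))
    · exact (convex_convexHull ℝ _).closure.linear_image _
  obtain ⟨q, hq, hqx⟩ := hshadow (mem_image_of_mem _ hx)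
  obtain ⟨r, rfl⟩ := mkQ_span_singleton_eq_iff.1 hqx.symm
  exact ⟨r, hq⟩

variable [FiniteDimensional ℝ E]

theorem mem_span_singleton_of_forall_sub_mem (hE : finrank ℝ E ≤ 3) (hu : u ≠ 0)
    (hB : IsCompact B) (hconv : Convex ℝ B) (hbal : Balanced ℝ B) {S : Set E} {s : ℝ} {c : E}
    (hS : S ⊆ topExtremePoints B u) (hs : -(s • u) ∈ convexHull ℝ S) (hc : ∀ p ∈ S, p - c ∈ B) :
    c ∈ ℝ ∙ u := by
  have h0 : (ℝ ∙ u).mkQ (-(s • u)) = 0 := by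
    rw [← LinearMap.mem_ker, Submodule.ker_mkQ]
    exact neg_mem (Submodule.smul_mem _ s (Submodule.mem_span_singleton_self u))
  have hmem : 0 ∈ convexHull ℝ {e ∈ ((ℝ ∙ u).mkQ '' B).extremePoints ℝ |
      e + (ℝ ∙ u).mkQ (-c) ∈ (ℝ ∙ u).mkQ '' B} := by
    rw [← h0]
    refine convexHull_mono ?_ ((LinearMap.image_convexHull _ S).subset (mem_image_of_mem _ hs))
    rintro _ ⟨p, hp, rfl⟩
    exact ⟨(hS hp).2.1, p - c, hc p hp, by rw [← map_add, sub_eq_add_neg]⟩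
  have hfinrank := finrank_quotient_span_singleton_add_one (E := E) hu
  have hzero := eq_zero_of_zero_mem_convexHull_extremePoints_add_mem (by lia)
    (hB.image (ℝ ∙ u).mkQL.continuous) (hconv.linear_image _) (balanced_image_of_balanced hbal _)
    hmem
  rwa [← LinearMap.mem_ker, Submodule.ker_mkQ, neg_mem_iff] at hzero

theorem neg_smul_notMem_convexHull_topExtremePoints (hE : finrank ℝ E ≤ 3) (hu : u ≠ 0)
    (hB : IsCompact B) (hconv : Convex ℝ B) (hbal : Balanced ℝ B)
    (hpark : ∀ S : Finset E, S.Nonempty → ↑S ⊆ B → Parkable (convexHull ℝ (S : Set E)) B)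
    {s : ℝ} (hs : 0 < s) : -(s • u) ∉ convexHull ℝ (topExtremePoints B u) := by
  intro hmem
  obtain ⟨S, hST, ⟨s, -, hsS⟩, hneg⟩ :=
    exists_finset_convexHull_inter_line_subset_neg_ray hu hs hmem
  have hS : S.Nonempty := convexHull_nonempty_iff.1 ⟨_, hsS⟩
  obtain ⟨c, hcS, hc⟩ :=
    (hpark S hS (hST.trans topExtremePoints_subset)).exists_forall_sub_mem
  have hSc : ∀ p ∈ S, p - c ∈ B := fun p hp ↦ hc p (subset_convexHull ℝ _ hp)
  obtain ⟨r, rfl⟩ := Submodule.mem_span_singleton.1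
    (mem_span_singleton_of_forall_sub_mem hE hu hB hconv hbal hST hsS hSc)
  obtain ⟨p, hp⟩ := hS
  have hr : -r ≤ 0 := (hST hp).2.2 (-r) (by
    rw [neg_smul, ← sub_eq_add_neg]
    exact hSc p hp)
  linarith [hneg r hcS]

theorem exists_pos_forall_exists_add_smul_mem_nonneg (hu : u ≠ 0) (hB : IsCompact B)
    (hconv : Convex ℝ B) (hnhds : B ∈ 𝓝 0)
    (hray : ∀ s : ℝ, 0 < s → -(s • u) ∉ convexHull ℝ (topExtremePoints B u)) :
    ∃ g : StrongDual ℝ E, 0 < g u ∧ ∀ x ∈ B, ∃ r : ℝ, x + r • u ∈ B ∧ 0 ≤ g (x + r • u) := by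
  have hcover {x : E} (hx : x ∈ B) :=
    exists_add_smul_mem_closure_convexHull_topExtremePoints hB hconv hu hx
  have hT : (topExtremePoints B u).Nonempty := by
    obtain ⟨r, hr⟩ := hcover (mem_of_mem_nhds hnhds)
    exact convexHull_nonempty_iff.1 (closure_nonempty_iff.1 ⟨_, hr⟩)
  obtain ⟨g, hg, hgu, hgT⟩ := exists_ne_zero_nonneg_of_neg_smul_notMem_convexHull hu hT hray
  have hlift : ∀ x ∈ B, ∃ r : ℝ, x + r • u ∈ B ∧ 0 ≤ g (x + r • u) := by
    intro x hx
    obtain ⟨r, hr⟩ := hcover hx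
    exact ⟨r, closure_minimal (convexHull_min topExtremePoints_subset hconv) hB.isClosed hr,
      closure_minimal hgT (isClosed_Ici.preimage g.continuous) hr⟩
  refine ⟨g, hgu.lt_of_ne' fun hgu₀ ↦ hg ?_, hlift⟩
  refine eq_zero_of_nonneg_on_nhds_zero hnhds fun x hx ↦ ?_
  obtain ⟨r, -, hr⟩ := hlift x hx
  simpa [hgu₀] using hr

end Shadow

theorem stmt_12_general {E : Type*} [NormedAddCommGroup E] [NormedSpace ℝ E]
    [FiniteDimensional ℝ E] (hE : finrank ℝ E ≤ 3) {B : Set E} (hB : IsCompact B)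
    (hconv : Convex ℝ B) (hint : (interior B).Nonempty) (hbal : Balanced ℝ B)
    (hpark : ∀ S : Finset E, S.Nonempty → ↑S ⊆ B → Parkable (convexHull ℝ (S : Set E)) B)
    {u : E} (hu : u ≠ 0) :
    ∃ H : Submodule ℝ E, finrank ℝ H + 1 = finrank ℝ E ∧
      ∀ p ∈ (H : Set E) ∩ frontier B, ∀ t : ℝ, p + t • u ∉ interior B := by
  have hnhds : B ∈ 𝓝 0 := mem_nhds_zero_of_balanced hconv hbal hint
  obtain ⟨g, hgu, hg⟩ := exists_pos_forall_exists_add_smul_mem_nonneg hu hB hconv hnhds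
    fun s hs ↦ neg_smul_notMem_convexHull_topExtremePoints hE hu hB hconv hbal hpark hs
  have hg₀ : g.toLinearMap ≠ 0 := fun h ↦ hgu.ne' (LinearMap.congr_fun h u)
  refine ⟨LinearMap.ker g.toLinearMap, Module.Dual.finrank_ker_add_one_of_ne_zero hg₀, ?_⟩
  rintro p ⟨hp, hfrontier⟩ t ht
  refine hfrontier.2 (mem_interior_of_add_smul_mem_interior hconv hnhds ?_ hp ht)
  exact fun q hq _ ↦ mem_of_add_smul_mem_of_apply_eq_zero hconv hbal hgu hg hq

/-- A centrally symmetric convex body `B ⊆ ℝ³` all of whose closed convex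
subsets are parkable in `B` has the Blaschke property. -/
theorem stmt_12 (B : Set (EuclideanSpace ℝ (Fin 3)))
    (hBcomp : IsCompact B) (hBconv : Convex ℝ B)
    (hBint : (interior B).Nonempty) (hB0 : (0 : EuclideanSpace ℝ (Fin 3)) ∈ B)
    (hBsym : B = -B)
    (hpark : ∀ C : Set (EuclideanSpace ℝ (Fin 3)),
      C ⊆ B → C.Nonempty → IsClosed C → Convex ℝ C →
      ∃ v : EuclideanSpace ℝ (Fin 3),
        (0 : EuclideanSpace ℝ (Fin 3)) ∈ (fun x => x + v) '' C ∧
        (fun x => x + v) '' C ⊆ B) :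
    ∀ u : EuclideanSpace ℝ (Fin 3), u ≠ 0 →
      ∃ H : Submodule ℝ (EuclideanSpace ℝ (Fin 3)), Module.finrank ℝ H = 2 ∧
        ∀ p ∈ (H : Set (EuclideanSpace ℝ (Fin 3))) ∩ frontier B,
          ∀ t : ℝ, p + t • u ∉ interior B := by
  intro u hu
  have hbal : Balanced ℝ B :=
    (balanced_iff_neg_mem hBconv).2 fun x hx ↦ Set.mem_neg.1 (hBsym ▸ hx)
  simpa using stmt_12_general (by simp) hBcomp hBconv hBint hbal (fun S hS hSB ↦
    hpark _ (convexHull_min hSB hBconv) hS.to_set.convexHull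
      (S.finite_toSet.isCompact_convexHull ℝ).isClosed (convex_convexHull ℝ _)) hu
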